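/- arXiv:2105.13201 — 4 statements merged into one kernel-verified Lean document; each statement's English description precedes it below -/
import Mathlib

section
/- There exists a universal constant C > 0 with the following property. Let d ≥ 1, let ρ̄ be a probability measure on the torus 𝕋^d, and let φ : 𝕋^d × 𝕋^d → ℝ be a bounded measurable function satisfying the cancellations ∫_{𝕋^d} φ(x,y) dρ̄(x) = 0 for every y ∈ 𝕋^d and ∫_{𝕋^d} φ(x,y) dρ̄(y) = 0 for every x ∈ 𝕋^d. If γ := C‖φ‖_{L^∞}² < 1, then for every integer N ≥ 2, ∫_{(𝕋^d)^N} exp( N ⟨φ, μ_N ⊗ μ_N⟩ ) dρ̄^{⊗N}(x_1,…,x_N) ≤ 2/(1 − γ). -/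
open MeasureTheory

/-- The `d`-dimensional torus `𝕋^d`. -/
abbrev Torus (d : ℕ) := Fin d → AddCircle (2 * Real.pi)

/-!
Absorb the factor `1 / N` into `φ`. The exponent splits into a diagonal part, at most `B`, and an
off-diagonal part. The latter is four times the mean, over all subsets `I` of the indices, of its
restriction to `I ×ˢ Iᶜ`, so by Jensen it suffices to bound the exponential moment of a decoupled
sum `∑ i, ∑ j, φ (x i) (y j)` with independent samples `x` and `y`.

Given `x`, this is `∑ j, f (y j)` for the centred function `f y = ∑ i, φ (x i) y`. If there are `n`
variables `y j`, then `exp f ≤ f + exp (f ^ 2)` and Jensen bound its exponential moment by the mean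
of `exp (n * f ^ 2)`. For fixed `y`, the variable `f y` is a sum of bounded centred independent
functions of the `x i`, hence sub-Gaussian, and the exponential moments of the square of a
sub-Gaussian variable are at most those of the square of a Gaussian.
-/

open Real ProbabilityTheory Finset
open scoped NNReal

lemma exp_le_add_exp_sq (x : ℝ) : exp x ≤ x + exp (x ^ 2) := by
  have hsq : x ^ 2 + 1 ≤ exp (x ^ 2) := add_one_le_exp _
  rcases le_total |x| 1 with hx | hx
  · linarith [(abs_le.1 (abs_exp_sub_one_sub_id_le hx)).2]
  rcases le_abs'.1 hx with hneg | hpos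
  · nlinarith [exp_le_one_iff.2 (show x ≤ 0 by linarith)]
  · have : exp x ≤ exp (x ^ 2) := exp_le_exp.2 (le_self_pow₀ hpos two_ne_zero)
    linarith

section SubGaussian

variable {Ω X : Type*} [MeasurableSpace Ω] [MeasurableSpace X]

lemma lintegral_exp_mul_sq_gaussianReal {c : ℝ} {v : ℝ≥0} (hcv : c * v < 1) :
    ∫⁻ x, ENNReal.ofReal (exp (c * x ^ 2 / 2)) ∂gaussianReal 0 v
      = ENNReal.ofReal (√(1 - c * v))⁻¹ := by
  rcases eq_or_ne v 0 with rfl | hv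
  · simp [gaussianReal_zero_var]
  have hv' : (0 : ℝ) < v := by positivity
  set b : ℝ := (1 - c * v) / (2 * v) with hb
  have hb0 : 0 < b := div_pos (by linarith) (by positivity)
  have hdensity (x : ℝ) : gaussianPDFReal 0 v x * exp (c * x ^ 2 / 2)
      = (√(2 * π * v))⁻¹ * exp (-b * x ^ 2) := by
    rw [gaussianPDFReal, mul_assoc, ← exp_add, hb]
    congr 2
    field_simp
    ring
  have hnormalization : (√(2 * π * v))⁻¹ * √(π / b) = (√(1 - c * v))⁻¹ := by
    rw [← sqrt_inv, ← sqrt_inv, ← sqrt_mul (by positivity), hb]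
    congr 1
    field_simp
  calc ∫⁻ x, ENNReal.ofReal (exp (c * x ^ 2 / 2)) ∂gaussianReal 0 v
      = ∫⁻ x, ENNReal.ofReal ((√(2 * π * v))⁻¹ * exp (-b * x ^ 2)) := by
        rw [gaussianReal_of_var_ne_zero 0 hv,
          lintegral_withDensity_eq_lintegral_mul _ (measurable_gaussianPDF 0 v) (by fun_prop)]
        refine lintegral_congr fun x ↦ ?_
        rw [Pi.mul_apply, gaussianPDF, ← ENNReal.ofReal_mul (gaussianPDFReal_nonneg 0 v x),
          hdensity]
    _ = ENNReal.ofReal (√(1 - c * v))⁻¹ := by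
        rw [← ofReal_integral_eq_lintegral_ofReal ((integrable_exp_neg_mul_sq hb0).const_mul _)
          (ae_of_all _ fun x ↦ by positivity), integral_const_mul, integral_gaussian,
          hnormalization]

lemma lintegral_exp_mul_gaussianReal (v : ℝ≥0) (t : ℝ) :
    ∫⁻ g, ENNReal.ofReal (exp (t * g)) ∂gaussianReal 0 v
      = ENNReal.ofReal (exp (v * t ^ 2 / 2)) := by
  rw [← ofReal_integral_eq_lintegral_ofReal (integrable_exp_mul_gaussianReal t)
    (ae_of_all _ fun g ↦ (exp_pos _).le)]
  simpa [mgf] using congrArg ENNReal.ofReal (congrFun (mgf_id_gaussianReal (μ := 0) (v := v)) t)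

/-- Linearize the square with an independent Gaussian variable `g` of variance `v`: conditionally on
`Z`, the mean of `exp (Z * g)` is `exp (v * Z ^ 2 / 2)`. -/
lemma lintegral_exp_mul_sq_le_of_hasSubgaussianMGF {μ : Measure Ω} [SFinite μ] {Z : Ω → ℝ}
    {c v : ℝ≥0} (hZ : HasSubgaussianMGF Z c μ) (hcv : (c * v : ℝ) < 1) :
    ∫⁻ ω, ENNReal.ofReal (exp (v * Z ω ^ 2 / 2)) ∂μ ≤ ENNReal.ofReal (√(1 - c * v))⁻¹ := by
  have hmeas : AEMeasurable (fun p : Ω × ℝ ↦ ENNReal.ofReal (exp (Z p.1 * p.2)))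
      (μ.prod (gaussianReal 0 v)) :=
    ((hZ.aemeasurable.comp_fst.mul measurable_snd.aemeasurable).exp).ennreal_ofReal
  calc ∫⁻ ω, ENNReal.ofReal (exp (v * Z ω ^ 2 / 2)) ∂μ
      = ∫⁻ g, ∫⁻ ω, ENNReal.ofReal (exp (Z ω * g)) ∂μ ∂gaussianReal 0 v := by
        simp_rw [← lintegral_exp_mul_gaussianReal]
        exact lintegral_lintegral_swap hmeas
    _ ≤ ∫⁻ g, ENNReal.ofReal (exp (c * g ^ 2 / 2)) ∂gaussianReal 0 v := by
        refine lintegral_mono fun g ↦ ?_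
        simp_rw [mul_comm (Z _) g]
        rw [← ofReal_integral_eq_lintegral_ofReal (hZ.integrable_exp_mul g)
          (ae_of_all _ fun ω ↦ (exp_pos _).le)]
        exact ENNReal.ofReal_le_ofReal (hZ.mgf_le g)
    _ = ENNReal.ofReal (√(1 - c * v))⁻¹ := lintegral_exp_mul_sq_gaussianReal hcv

lemma integral_exp_mul_sq_le_of_hasSubgaussianMGF {μ : Measure Ω} [SFinite μ] {Z : Ω → ℝ}
    {c v : ℝ≥0} (hZ : HasSubgaussianMGF Z c μ) (hcv : (c * v : ℝ) < 1) :
    ∫ ω, exp (v * Z ω ^ 2 / 2) ∂μ ≤ (√(1 - c * v))⁻¹ := by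
  have hmeas := hZ.aestronglyMeasurable
  rw [integral_eq_lintegral_of_nonneg_ae (ae_of_all _ fun ω ↦ (exp_pos _).le)
    (by fun_prop)]
  exact ENNReal.toReal_le_of_le_ofReal (by positivity)
    (lintegral_exp_mul_sq_le_of_hasSubgaussianMGF hZ hcv)

lemma hasSubgaussianMGF_of_abs_le {μ : Measure X} [IsProbabilityMeasure μ] {f : X → ℝ} {B : ℝ}
    (hf : AEMeasurable f μ) (hB : ∀ᵐ x ∂μ, |f x| ≤ B) (h0 : ∫ x, f x ∂μ = 0) :
    HasSubgaussianMGF f (‖B‖₊ ^ 2) μ := by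
  convert hasSubgaussianMGF_of_mem_Icc_of_integral_eq_zero hf
    (hB.mono fun _ ↦ abs_le.1) h0 using 1
  ext
  simp [← two_mul]

lemma hasSubgaussianMGF_sum_pi {ι : Type*} [Fintype ι] {μ : Measure X} [IsProbabilityMeasure μ]
    {f : X → ℝ} {c : ℝ≥0} (hf : HasSubgaussianMGF f c μ) :
    HasSubgaussianMGF (fun x : ι → X ↦ ∑ i, f (x i)) (Fintype.card ι * c)
      (Measure.pi fun _ ↦ μ) := by
  have hcoord (i : ι) :
      HasSubgaussianMGF (fun x : ι → X ↦ f (x i)) c (Measure.pi fun _ ↦ μ) :=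
    .of_map (Y := Function.eval i) (measurable_pi_apply i).aemeasurable
      (by rwa [(measurePreserving_eval (fun _ ↦ μ) i).map_eq])
  simpa using HasSubgaussianMGF.sum_of_iIndepFun (s := univ) (iIndepFun_pi fun _ ↦ hf.aemeasurable)
    fun i _ ↦ hcoord i

end SubGaussian

section Centered

variable {Y : Type*} [MeasurableSpace Y]

lemma integrable_exp_of_abs_le {ν : Measure Y} [IsFiniteMeasure ν] {f : Y → ℝ} {B : ℝ}
    (hf : AEMeasurable f ν) (hB : ∀ᵐ y ∂ν, |f y| ≤ B) : Integrable (fun y ↦ exp (f y)) ν := by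
  simpa using integrable_exp_mul_of_mem_Icc (t := 1) hf (hB.mono fun _ ↦ abs_le.1)

lemma abs_mul_sq_le {a c B : ℝ} (hc : 0 ≤ c) (ha : |a| ≤ B) : |c * a ^ 2| ≤ c * B ^ 2 := by
  rw [abs_mul, abs_of_nonneg hc, abs_pow]
  gcongr

lemma integral_exp_le_integral_exp_sq {ν : Measure Y} [IsFiniteMeasure ν] {f : Y → ℝ} {B : ℝ}
    (hf : AEMeasurable f ν) (hB : ∀ᵐ y ∂ν, |f y| ≤ B) (h0 : ∫ y, f y ∂ν = 0) :
    ∫ y, exp (f y) ∂ν ≤ ∫ y, exp (f y ^ 2) ∂ν := by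
  have hint : Integrable f ν := .of_bound hf.aestronglyMeasurable B hB
  have hint_sq : Integrable (fun y ↦ exp (f y ^ 2)) ν :=
    integrable_exp_of_abs_le (hf.pow_const 2) <| hB.mono fun y hy ↦ by
      simpa using abs_mul_sq_le zero_le_one hy
  calc ∫ y, exp (f y) ∂ν ≤ ∫ y, (f y + exp (f y ^ 2)) ∂ν :=
        integral_mono (integrable_exp_of_abs_le hf hB) (hint.add hint_sq)
          fun y ↦ exp_le_add_exp_sq (f y)
    _ = ∫ y, exp (f y ^ 2) ∂ν := by rw [integral_add hint hint_sq, h0, zero_add]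

lemma integral_exp_sum_pi_le {κ : Type*} [Fintype κ] {ν : Measure Y} [IsProbabilityMeasure ν]
    {f : Y → ℝ} {B : ℝ} (hf : AEMeasurable f ν) (hB : ∀ᵐ y ∂ν, |f y| ≤ B) (h0 : ∫ y, f y ∂ν = 0) :
    ∫ y : κ → Y, exp (∑ j, f (y j)) ∂(Measure.pi fun _ ↦ ν)
      ≤ ∫ y, exp (Fintype.card κ * f y ^ 2) ∂ν := by
  set n := Fintype.card κ
  have hint (c : ℝ) (hc : 0 ≤ c) : Integrable (fun y ↦ exp (c * f y ^ 2)) ν :=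
    integrable_exp_of_abs_le ((hf.pow_const 2).const_mul c) (hB.mono fun _ ↦ abs_mul_sq_le hc)
  calc ∫ y : κ → Y, exp (∑ j, f (y j)) ∂(Measure.pi fun _ ↦ ν)
      = (∫ y, exp (f y) ∂ν) ^ n := by
        simp_rw [exp_sum]
        exact integral_fintype_prod_eq_pow (fun y ↦ exp (f y))
    _ ≤ (∫ y, exp (f y ^ 2) ∂ν) ^ n :=
        pow_le_pow_left₀ (integral_nonneg fun y ↦ (exp_pos _).le)
          (integral_exp_le_integral_exp_sq hf hB h0) n
    _ ≤ ∫ y, exp (f y ^ 2) ^ n ∂ν :=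
        (convexOn_pow n).map_integral_le (continuous_pow n).continuousOn isClosed_Ici
          (ae_of_all _ fun y ↦ (exp_pos _).le) (by simpa using hint 1 zero_le_one)
          (by simpa [Function.comp_def, ← exp_nat_mul] using hint n n.cast_nonneg)
    _ = ∫ y, exp (n * f y ^ 2) ∂ν := by simp_rw [exp_nat_mul]

end Centered

section DegenerateKernel

variable {X Y : Type*} [MeasurableSpace X] [MeasurableSpace Y]
  {μ : Measure X} {ν : Measure Y} {φ : X → Y → ℝ} {B : ℝ}

/-- A measurable kernel `φ`, bounded by `B`, which is completely degenerate (canonical) in the sense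
of the theory of U-statistics: integrating out either variable gives zero. -/
structure IsDegenerateKernel (μ : Measure X) (ν : Measure Y) (φ : X → Y → ℝ) (B : ℝ) : Prop where
  measurable : Measurable (Function.uncurry φ)
  abs_le : ∀ x y, |φ x y| ≤ B
  integral_left : ∀ y, ∫ x, φ x y ∂μ = 0
  integral_right : ∀ x, ∫ y, φ x y ∂ν = 0

namespace IsDegenerateKernel

lemma const_mul (h : IsDegenerateKernel μ ν φ B) {c : ℝ} (hc : 0 ≤ c) :
    IsDegenerateKernel μ ν (fun x y ↦ c * φ x y) (c * B) where
  measurable := h.measurable.const_mul c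
  abs_le x y := by
    rw [abs_mul, abs_of_nonneg hc]
    exact mul_le_mul_of_nonneg_left (h.abs_le x y) hc
  integral_left y := by rw [integral_const_mul, h.integral_left, mul_zero]
  integral_right x := by rw [integral_const_mul, h.integral_right, mul_zero]

lemma measurable_comp (h : IsDegenerateKernel μ ν φ B) {Ω : Type*} [MeasurableSpace Ω] {f : Ω → X}
    {g : Ω → Y} (hf : Measurable f) (hg : Measurable g) : Measurable fun ω ↦ φ (f ω) (g ω) :=
  h.measurable.comp (hf.prodMk hg)

lemma abs_sum_le (h : IsDegenerateKernel μ ν φ B) {κ : Type*} (s : Finset κ) (x : κ → X)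
    (y : κ → Y) : |∑ k ∈ s, φ (x k) (y k)| ≤ #s * B :=
  (abs_sum_le_sum_abs _ _).trans <| (sum_le_card_nsmul _ _ _ fun _ _ ↦ h.abs_le _ _).trans_eq <|
    nsmul_eq_mul _ _

variable {ι κ : Type*} [Fintype ι] [Fintype κ]

lemma integral_exp_sum_sum_right_le [IsProbabilityMeasure ν] (h : IsDegenerateKernel μ ν φ B)
    (x : ι → X) :
    ∫ y : κ → Y, exp (∑ i, ∑ j, φ (x i) (y j)) ∂(Measure.pi fun _ ↦ ν)
      ≤ ∫ y, exp (Fintype.card κ * (∑ i, φ (x i) y) ^ 2) ∂ν := by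
  have hmeas (i : ι) : Measurable (φ (x i)) := h.measurable.of_uncurry_left
  have hcentered : ∫ y, ∑ i, φ (x i) y ∂ν = 0 := by
    rw [integral_finsetSum _ fun i _ ↦ .of_bound (hmeas i).aestronglyMeasurable B
      (ae_of_all _ (h.abs_le (x i)))]
    simp [h.integral_right]
  simp_rw [sum_comm (s := univ (α := ι))]
  exact integral_exp_sum_pi_le (by fun_prop)
    (ae_of_all _ fun y ↦ h.abs_sum_le univ x fun _ ↦ y) hcentered

lemma integral_exp_mul_sq_sum_left_le [IsProbabilityMeasure μ] (h : IsDegenerateKernel μ ν φ B)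
    (n : ℕ) (hB : 2 * (Fintype.card ι * n) * B ^ 2 < 1) (y : Y) :
    ∫ x : ι → X, exp (n * (∑ i, φ (x i) y) ^ 2) ∂(Measure.pi fun _ ↦ μ)
      ≤ (√(1 - 2 * (Fintype.card ι * n) * B ^ 2))⁻¹ := by
  have hsub := hasSubgaussianMGF_sum_pi (ι := ι) <| hasSubgaussianMGF_of_abs_le
    h.measurable.of_uncurry_right.aemeasurable (ae_of_all _ (h.abs_le · y)) (h.integral_left y)
  have hparam : (↑(Fintype.card ι * ‖B‖₊ ^ 2) * ↑(2 * n : ℝ≥0) : ℝ)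
      = 2 * (Fintype.card ι * n) * B ^ 2 := by
    push_cast
    rw [norm_eq_abs, sq_abs]
    ring
  have hmoment := integral_exp_mul_sq_le_of_hasSubgaussianMGF (v := 2 * n) hsub (by rwa [hparam])
  rw [hparam] at hmoment
  convert hmoment using 5
  push_cast
  ring

theorem integral_exp_sum_prod_le [IsProbabilityMeasure μ] [IsProbabilityMeasure ν]
    (h : IsDegenerateKernel μ ν φ B)
    (hB : 2 * (Fintype.card ι * Fintype.card κ) * B ^ 2 < 1) :
    ∫ p : (ι → X) × (κ → Y), exp (∑ i, ∑ j, φ (p.1 i) (p.2 j))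
        ∂((Measure.pi fun _ ↦ μ).prod (Measure.pi fun _ ↦ ν))
      ≤ (√(1 - 2 * (Fintype.card ι * Fintype.card κ) * B ^ 2))⁻¹ := by
  set n := Fintype.card κ
  have hint : Integrable (fun p : (ι → X) × (κ → Y) ↦ exp (∑ i, ∑ j, φ (p.1 i) (p.2 j)))
      ((Measure.pi fun _ ↦ μ).prod (Measure.pi fun _ ↦ ν)) := by
    simp_rw [← sum_product']
    exact integrable_exp_of_abs_le (Finset.measurable_sum _ fun k _ ↦ h.measurable_comp
      (by fun_prop) (by fun_prop)).aemeasurable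
      (ae_of_all _ fun p ↦ h.abs_sum_le _ (fun k : ι × κ ↦ p.1 k.1) fun k ↦ p.2 k.2)
  have hint_sq : Integrable (fun p : (ι → X) × Y ↦ exp (n * (∑ i, φ (p.1 i) p.2) ^ 2))
      ((Measure.pi fun _ ↦ μ).prod ν) :=
    integrable_exp_of_abs_le (((Finset.measurable_sum _ fun i _ ↦ h.measurable_comp
      (by fun_prop) (by fun_prop)).pow_const 2).const_mul _).aemeasurable
      (ae_of_all _ fun p ↦ abs_mul_sq_le n.cast_nonneg (h.abs_sum_le univ p.1 fun _ ↦ p.2))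
  calc ∫ p : (ι → X) × (κ → Y), exp (∑ i, ∑ j, φ (p.1 i) (p.2 j))
        ∂((Measure.pi fun _ ↦ μ).prod (Measure.pi fun _ ↦ ν))
      = ∫ x : ι → X, ∫ y : κ → Y, exp (∑ i, ∑ j, φ (x i) (y j))
          ∂(Measure.pi fun _ ↦ ν) ∂(Measure.pi fun _ ↦ μ) := integral_prod _ hint
    _ ≤ ∫ x : ι → X, ∫ y, exp (n * (∑ i, φ (x i) y) ^ 2) ∂ν ∂(Measure.pi fun _ ↦ μ) :=
        integral_mono hint.integral_prod_left hint_sq.integral_prod_left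
          h.integral_exp_sum_sum_right_le
    _ = ∫ y, ∫ x : ι → X, exp (n * (∑ i, φ (x i) y) ^ 2) ∂(Measure.pi fun _ ↦ μ) ∂ν :=
        integral_integral_swap hint_sq
    _ ≤ ∫ _, (√(1 - 2 * (Fintype.card ι * n) * B ^ 2))⁻¹ ∂ν :=
        integral_mono hint_sq.integral_prod_right (integrable_const _)
          (h.integral_exp_mul_sq_sum_left_le n hB)
    _ = (√(1 - 2 * (Fintype.card ι * n) * B ^ 2))⁻¹ := by simp

end IsDegenerateKernel

end DegenerateKernel

section Decoupling

variable {ι : Type*} [Fintype ι] [DecidableEq ι]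

lemma four_mul_card_Icc_singleton_compl {i j : ι} (hij : i ≠ j) :
    4 * #(Icc {i} ({j}ᶜ : Finset ι)) = 2 ^ Fintype.card ι := by
  have hcard : 1 < Fintype.card ι := Fintype.one_lt_card_iff.2 ⟨i, j, hij⟩
  rw [card_Icc_finset (by simpa using hij.symm), card_compl, card_singleton, card_singleton,
    show 4 = 2 ^ 2 from rfl, ← pow_add]
  congr 1
  lia

lemma four_mul_sum_sum_product_compl (a : ι × ι → ℝ) :
    4 * ∑ I : Finset ι, ∑ p ∈ I ×ˢ Iᶜ, a p = 2 ^ Fintype.card ι * ∑ p ∈ univ.offDiag, a p := by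
  rw [sum_comm' (t' := univ.offDiag) (s' := fun p ↦ Icc {p.1} {p.2}ᶜ), mul_sum, mul_sum]
  · refine sum_congr rfl fun p hp ↦ ?_
    rw [sum_const, nsmul_eq_mul, ← mul_assoc]
    exact_mod_cast congrArg (· * a p)
      (congrArg (Nat.cast (R := ℝ)) (four_mul_card_Icc_singleton_compl (mem_offDiag.1 hp).2.2))
  · rintro I ⟨i, j⟩
    simp only [mem_univ, mem_product, mem_compl, mem_Icc, mem_offDiag, true_and,
      singleton_subset_iff, subset_compl_comm (s := I)]
    grind

lemma exp_sum_offDiag_le (a : ι × ι → ℝ) :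
    exp (∑ p ∈ univ.offDiag, a p)
      ≤ ∑ I : Finset ι, (2 ^ Fintype.card ι : ℝ)⁻¹ * exp (∑ p ∈ I ×ˢ Iᶜ, 4 * a p) := by
  have hmean : ∑ p ∈ univ.offDiag, a p
      = ∑ I : Finset ι, (2 ^ Fintype.card ι : ℝ)⁻¹ • ∑ p ∈ I ×ˢ Iᶜ, 4 * a p := by
    simp_rw [← mul_sum, smul_eq_mul, ← mul_sum]
    rw [four_mul_sum_sum_product_compl, inv_mul_cancel_left₀ (by positivity)]
  rw [hmean]
  exact convexOn_exp.map_sum_le (fun _ _ ↦ by positivity) (by simp) (by simp)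

end Decoupling

namespace IsDegenerateKernel

variable {X ι : Type*} [MeasurableSpace X] [Fintype ι] {μ : Measure X} [IsProbabilityMeasure μ]
  {φ : X → X → ℝ} {B : ℝ}

lemma integrable_exp_sum (h : IsDegenerateKernel μ μ φ B) (s : Finset (ι × ι)) :
    Integrable (fun x : ι → X ↦ exp (∑ p ∈ s, φ (x p.1) (x p.2))) (Measure.pi fun _ ↦ μ) :=
  integrable_exp_of_abs_le (Finset.measurable_sum _ fun p _ ↦ h.measurable_comp
      (measurable_pi_apply p.1) (measurable_pi_apply p.2)).aemeasurable
    (ae_of_all _ fun x ↦ h.abs_sum_le s (fun p ↦ x p.1) fun p ↦ x p.2)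

lemma integral_exp_sum_subtype_le (h : IsDegenerateKernel μ μ φ B)
    (hB : (Fintype.card ι * B) ^ 2 / 2 < 1) (p : ι → Prop) [DecidablePred p] :
    ∫ x : ι → X, exp (∑ i : {i // p i}, ∑ j : {j // ¬p j}, φ (x i) (x j)) ∂(Measure.pi fun _ ↦ μ)
      ≤ (√(1 - (Fintype.card ι * B) ^ 2 / 2))⁻¹ := by
  set m := Fintype.card {i // p i}
  set n := Fintype.card {j // ¬p j}
  have hcard : (m : ℝ) + n = Fintype.card ι := by
    exact_mod_cast Fintype.card_sum.symm.trans (Fintype.card_congr (Equiv.sumCompl p))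
  have hparam : 2 * (m * n) * B ^ 2 ≤ (Fintype.card ι * B) ^ 2 / 2 := by
    rw [← hcard, mul_pow]
    nlinarith [mul_nonneg (sq_nonneg (m - n : ℝ)) (sq_nonneg B)]
  have hpos : 0 < √(1 - (Fintype.card ι * B) ^ 2 / 2) := sqrt_pos.2 (sub_pos.2 hB)
  calc ∫ x : ι → X, exp (∑ i : {i // p i}, ∑ j : {j // ¬p j}, φ (x i) (x j))
        ∂(Measure.pi fun _ ↦ μ)
      = ∫ q : ({i // p i} → X) × ({j // ¬p j} → X), exp (∑ i, ∑ j, φ (q.1 i) (q.2 j))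
          ∂((Measure.pi fun _ ↦ μ).prod (Measure.pi fun _ ↦ μ)) :=
        (measurePreserving_piEquivPiSubtypeProd (fun _ : ι ↦ μ) p).integral_comp'
          fun q ↦ exp (∑ i, ∑ j, φ (q.1 i) (q.2 j))
    _ ≤ (√(1 - 2 * (m * n) * B ^ 2))⁻¹ := h.integral_exp_sum_prod_le (hparam.trans_lt hB)
    _ ≤ (√(1 - (Fintype.card ι * B) ^ 2 / 2))⁻¹ := by gcongr

lemma integral_exp_sum_product_compl_le [DecidableEq ι] (h : IsDegenerateKernel μ μ φ B)
    (hB : (Fintype.card ι * B) ^ 2 / 2 < 1) (I : Finset ι) :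
    ∫ x : ι → X, exp (∑ p ∈ I ×ˢ Iᶜ, φ (x p.1) (x p.2)) ∂(Measure.pi fun _ ↦ μ)
      ≤ (√(1 - (Fintype.card ι * B) ^ 2 / 2))⁻¹ := by
  convert h.integral_exp_sum_subtype_le hB (· ∈ I) using 4 with x
  rw [sum_product, sum_subtype I fun _ ↦ Iff.rfl]
  exact sum_congr rfl fun i _ ↦ sum_subtype Iᶜ (fun _ ↦ mem_compl) _

lemma integral_exp_sum_offDiag_le (h : IsDegenerateKernel μ μ φ B)
    (hB : 8 * (Fintype.card ι * B) ^ 2 < 1) :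
    ∫ x : ι → X, exp (∑ p ∈ univ.offDiag, φ (x p.1) (x p.2)) ∂(Measure.pi fun _ ↦ μ)
      ≤ (√(1 - 8 * (Fintype.card ι * B) ^ 2))⁻¹ := by
  classical
  have h4 : IsDegenerateKernel μ μ (fun x y ↦ 4 * φ x y) (4 * B) := h.const_mul (by norm_num)
  have hparam : (Fintype.card ι * (4 * B)) ^ 2 / 2 = 8 * (Fintype.card ι * B) ^ 2 := by ring
  have hint (I : Finset ι) :
      Integrable (fun x : ι → X ↦ (2 ^ Fintype.card ι : ℝ)⁻¹
        * exp (∑ p ∈ I ×ˢ Iᶜ, 4 * φ (x p.1) (x p.2))) (Measure.pi fun _ ↦ μ) :=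
    (h4.integrable_exp_sum _).const_mul _
  calc ∫ x : ι → X, exp (∑ p ∈ univ.offDiag, φ (x p.1) (x p.2)) ∂(Measure.pi fun _ ↦ μ)
      ≤ ∫ x : ι → X, ∑ I : Finset ι, (2 ^ Fintype.card ι : ℝ)⁻¹
          * exp (∑ p ∈ I ×ˢ Iᶜ, 4 * φ (x p.1) (x p.2)) ∂(Measure.pi fun _ ↦ μ) :=
        integral_mono (h.integrable_exp_sum _) (integrable_finsetSum _ fun I _ ↦ hint I)
          fun x ↦ exp_sum_offDiag_le fun p ↦ φ (x p.1) (x p.2)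
    _ = ∑ I : Finset ι, (2 ^ Fintype.card ι : ℝ)⁻¹
          * ∫ x : ι → X, exp (∑ p ∈ I ×ˢ Iᶜ, 4 * φ (x p.1) (x p.2)) ∂(Measure.pi fun _ ↦ μ) := by
        rw [integral_finsetSum _ fun I _ ↦ hint I]
        simp_rw [integral_const_mul]
    _ ≤ ∑ _ : Finset ι, (2 ^ Fintype.card ι : ℝ)⁻¹
          * (√(1 - 8 * (Fintype.card ι * B) ^ 2))⁻¹ := by
        gcongr with I
        simpa only [hparam] using h4.integral_exp_sum_product_compl_le (by rwa [hparam]) I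
    _ = (√(1 - 8 * (Fintype.card ι * B) ^ 2))⁻¹ := by simp

theorem integral_exp_sum_sum_le (h : IsDegenerateKernel μ μ φ B)
    (hB : 8 * (Fintype.card ι * B) ^ 2 < 1) :
    ∫ x : ι → X, exp (∑ i, ∑ j, φ (x i) (x j)) ∂(Measure.pi fun _ ↦ μ)
      ≤ exp (Fintype.card ι * B) * (√(1 - 8 * (Fintype.card ι * B) ^ 2))⁻¹ := by
  classical
  have hdiag (x : ι → X) : ∑ i, ∑ j, φ (x i) (x j)
      ≤ Fintype.card ι * B + ∑ p ∈ univ.offDiag, φ (x p.1) (x p.2) := by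
    rw [← sum_product' (f := fun i j ↦ φ (x i) (x j)), ← diag_union_offDiag,
      sum_union (disjoint_diag_offDiag _), sum_diag]
    gcongr
    exact (le_abs_self _).trans (h.abs_sum_le univ x x)
  have hint : Integrable (fun x : ι → X ↦ exp (∑ i, ∑ j, φ (x i) (x j)))
      (Measure.pi fun _ ↦ μ) := by
    simpa only [sum_product] using h.integrable_exp_sum (univ ×ˢ univ)
  calc ∫ x : ι → X, exp (∑ i, ∑ j, φ (x i) (x j)) ∂(Measure.pi fun _ ↦ μ)
      ≤ ∫ x : ι → X, exp (Fintype.card ι * B) * exp (∑ p ∈ univ.offDiag, φ (x p.1) (x p.2))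
          ∂(Measure.pi fun _ ↦ μ) :=
        integral_mono hint ((h.integrable_exp_sum _).const_mul _)
          fun x ↦ (exp_le_exp.2 (hdiag x)).trans_eq (exp_add _ _)
    _ ≤ exp (Fintype.card ι * B) * (√(1 - 8 * (Fintype.card ι * B) ^ 2))⁻¹ := by
        rw [integral_const_mul]
        gcongr
        exact h.integral_exp_sum_offDiag_le hB

end IsDegenerateKernel

lemma exp_mul_inv_sqrt_one_sub_le {B : ℝ} (hB : 8 * B ^ 2 < 1) :
    exp B * (√(1 - 8 * B ^ 2))⁻¹ ≤ 2 / (1 - 8 * B ^ 2) := by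
  have hpos : 0 < 1 - 8 * B ^ 2 := sub_pos.2 hB
  have hexp : exp B ≤ 2 := by
    rw [← le_log_iff_exp_le two_pos]
    nlinarith [log_two_gt_d9]
  have hsqrt : 1 - 8 * B ^ 2 ≤ √(1 - 8 * B ^ 2) :=
    le_sqrt_of_sq_le (pow_le_of_le_one hpos.le (by nlinarith) two_ne_zero)
  rw [div_eq_mul_inv]
  gcongr

theorem statement0_general {X : Type*} [MeasurableSpace X] {ρ : Measure X} [IsProbabilityMeasure ρ]
    {φ : X → X → ℝ} (hφ : Measurable (Function.uncurry φ)) {B : ℝ} (hB : ∀ x y, |φ x y| ≤ B)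
    (hleft : ∀ y, ∫ x, φ x y ∂ρ = 0) (hright : ∀ x, ∫ y, φ x y ∂ρ = 0) (hγ : 8 * B ^ 2 < 1)
    {N : ℕ} (hN : N ≠ 0) :
    ∫ x : Fin N → X, exp (N * (((N : ℝ) ^ 2)⁻¹ * ∑ i, ∑ j, φ (x i) (x j)))
        ∂(Measure.pi fun _ ↦ ρ)
      ≤ 2 / (1 - 8 * B ^ 2) := by
  have hkernel : IsDegenerateKernel ρ ρ (fun x y ↦ (N : ℝ)⁻¹ * φ x y) ((N : ℝ)⁻¹ * B) :=
    IsDegenerateKernel.const_mul ⟨hφ, hB, hleft, hright⟩ (by positivity)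
  have hparam : (Fintype.card (Fin N) : ℝ) * ((N : ℝ)⁻¹ * B) = B := by
    rw [Fintype.card_fin, mul_inv_cancel_left₀ (by exact_mod_cast hN)]
  have hscale (x : Fin N → X) : N * (((N : ℝ) ^ 2)⁻¹ * ∑ i, ∑ j, φ (x i) (x j))
      = ∑ i, ∑ j, (N : ℝ)⁻¹ * φ (x i) (x j) := by
    simp_rw [← mul_sum]
    field_simp
  have hmoment := hkernel.integral_exp_sum_sum_le (ι := Fin N) (by rwa [hparam])
  simp_rw [hscale]
  rw [hparam] at hmoment
  exact hmoment.trans (exp_mul_inv_sqrt_one_sub_le hγ)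

/-- **Large deviation estimate of Jabin–Wang.**
There exists a universal constant `C > 0` such that for every `d ≥ 1`, every probability
measure `ρ̄` on the torus `𝕋^d`, and every bounded measurable function
`φ : 𝕋^d × 𝕋^d → ℝ` (with pointwise bound `B`) satisfying the cancellations
`∫ φ(x,y) dρ̄(x) = 0` for all `y` and `∫ φ(x,y) dρ̄(y) = 0` for all `x`:
if `γ := C‖φ‖_∞² < 1` then for every `N ≥ 2`,
`∫ exp(N ⟨φ, μ_N ⊗ μ_N⟩) dρ̄^{⊗N} ≤ 2/(1 − γ)`,
where `⟨φ, μ_N ⊗ μ_N⟩ = N⁻² ∑_{i,j} φ(x_i, x_j)`. -/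
theorem statement0 :
    ∃ C : ℝ, 0 < C ∧
      ∀ (d : ℕ), 1 ≤ d →
      ∀ (ρ : Measure (Torus d)), IsProbabilityMeasure ρ →
      ∀ (φ : Torus d → Torus d → ℝ), Measurable (Function.uncurry φ) →
      ∀ B : ℝ, (∀ x y, |φ x y| ≤ B) →
        (∀ y, ∫ x, φ x y ∂ρ = 0) →
        (∀ x, ∫ y, φ x y ∂ρ = 0) →
        C * B ^ 2 < 1 →
        ∀ N : ℕ, 2 ≤ N →
          ∫ x : Fin N → Torus d,
              Real.exp ((N : ℝ) *
                (((N : ℝ) ^ 2)⁻¹ * ∑ i : Fin N, ∑ j : Fin N, φ (x i) (x j)))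
            ∂(Measure.pi fun _ => ρ)
          ≤ 2 / (1 - C * B ^ 2) :=
  ⟨8, by norm_num, fun _ _ _ _ _ hφ _ hB hleft hright hγ _ hN ↦
    statement0_general hφ hB hleft hright hγ (by lia)⟩
end

section
/- Let d ≥ 1, let ρ̄ be a probability measure on the torus 𝕋^d, and let φ : 𝕋^d × 𝕋^d → ℝ be a bounded measurable function satisfying the cancellation ∫_{𝕋^d × 𝕋^d} φ(x,y) dρ̄(x) dρ̄(y) = 0. Set α₀ := e⁹ ‖φ‖_{L^∞}² and β₀ := 4e ‖φ‖_{L^∞}², and assume α₀ < 1 and β₀ < 1. Then for every integer N ≥ 1, ∫_{(𝕋^d)^N} exp( N |⟨φ, μ_N ⊗ μ_N⟩|² ) dρ̄^{⊗N}(x_1,…,x_N) ≤ 1 + α₀/(1 − α₀) + β₀/(1 − β₀). -/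
open MeasureTheory

/-!
Moving one of `n` sample points changes the V-statistic `V = ⟨φ, μ ⊗ μ⟩` by at most `4B/n`, so by
McDiarmid's inequality `V - 𝔼 V` is sub-Gaussian with variance proxy `4B²/n`. By the cancellation
and independence the off-diagonal terms have mean zero, hence `|𝔼 V| ≤ B/n`. Integrating the square
exponential of a sub-Gaussian variable gives
`𝔼 exp (n V²) ≤ exp (2n (𝔼 V)²) / √(1 - 16B²) ≤ exp (2B²) / √(1 - 16B²) ≤ 1 / (1 - 18B²)`,
and `18 ≤ e⁹`.
-/

open ProbabilityTheory Function Real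

/-- `F` has bounded differences `c` if changing only the `i`-th coordinate of its argument changes
its value by at most `c i`. The change of a coordinate is encoded by two points that agree off `i`,
which requires no decidable equality on the index type. -/
def HasBoundedDifferences {ι : Type*} {T : ι → Type*} (F : (∀ i, T i) → ℝ) (c : ι → ℝ) : Prop :=
  ∀ i x y, (∀ j ≠ i, x j = y j) → |F x - F y| ≤ c i

/-- The V-statistic `n⁻² ∑ᵢ ∑ⱼ φ(xᵢ, xⱼ)` of a sample `x` of size `n`, i.e. the pairing
`⟨φ, μ ⊗ μ⟩` of `φ` with the square of the empirical measure `μ` of `x`. -/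
noncomputable def vStatistic {ι Ω : Type*} [Fintype ι] (φ : Ω → Ω → ℝ) (x : ι → Ω) : ℝ :=
  ((Fintype.card ι : ℝ) ^ 2)⁻¹ * ∑ i, ∑ j, φ (x i) (x j)

section SquareExponential

variable {Ω : Type*} [MeasurableSpace Ω] {P : Measure Ω} {X : Ω → ℝ} {c : NNReal} {a b : ℝ}

lemma gaussianPDFReal_smul_exp_mul_sq (b x : ℝ) :
    gaussianPDFReal 0 1 x • exp (b * x ^ 2) = (√(2 * π))⁻¹ * exp (-(1 / 2 - b) * x ^ 2) := by
  simp only [gaussianPDFReal, smul_eq_mul, NNReal.coe_one, mul_one, sub_zero]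
  rw [mul_assoc, ← exp_add]
  ring_nf

lemma integrable_exp_mul_sq_gaussianReal (hb : 2 * b < 1) :
    Integrable (fun g ↦ exp (b * g ^ 2)) (gaussianReal 0 1) := by
  rw [gaussianReal_of_var_ne_zero 0 one_ne_zero,
    integrable_withDensity_iff_integrable_smul' (measurable_gaussianPDF 0 1)
      (ae_of_all _ fun _ ↦ gaussianPDF_lt_top)]
  simp only [toReal_gaussianPDF, gaussianPDFReal_smul_exp_mul_sq]
  exact (integrable_exp_neg_mul_sq (by linarith)).const_mul _

lemma integral_exp_mul_sq_gaussianReal (b : ℝ) :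
    ∫ g, exp (b * g ^ 2) ∂gaussianReal 0 1 = (√(1 - 2 * b))⁻¹ := by
  rw [integral_gaussianReal_eq_integral_smul one_ne_zero]
  simp only [gaussianPDFReal_smul_exp_mul_sq]
  rw [integral_const_mul, integral_gaussian, ← sqrt_inv, ← sqrt_mul (by positivity), ← sqrt_inv]
  congr 1
  field_simp

lemma integral_exp_mul_mul_gaussianReal (s y : ℝ) :
    ∫ g, exp (s * g * y) ∂gaussianReal 0 1 = exp (s ^ 2 / 2 * y ^ 2) := by
  have h_mgf := congrFun (mgf_fun_id_gaussianReal (μ := 0) (v := 1)) (s * y)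
  simp only [mgf, NNReal.coe_one, zero_mul, zero_add, one_mul] at h_mgf
  calc ∫ g, exp (s * g * y) ∂gaussianReal 0 1
      = ∫ g, exp (s * y * g) ∂gaussianReal 0 1 := by simp only [mul_right_comm]
    _ = exp (s ^ 2 / 2 * y ^ 2) := by rw [h_mgf]; ring_nf

lemma integrable_exp_mul_mul_prod_gaussianReal [SFinite P] (hX : HasSubgaussianMGF X c P) {s : ℝ}
    (hs : s ^ 2 * c < 1) :
    Integrable (fun p : Ω × ℝ ↦ exp (s * p.2 * X p.1)) (P.prod (gaussianReal 0 1)) := by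
  have h_meas : AEStronglyMeasurable (fun p : Ω × ℝ ↦ exp (s * p.2 * X p.1))
      (P.prod (gaussianReal 0 1)) :=
    ((measurable_snd.const_mul s).aemeasurable.mul
      hX.aemeasurable.comp_fst).exp.aestronglyMeasurable
  refine (integrable_prod_iff' h_meas).2 ⟨ae_of_all _ fun g ↦ hX.integrable_exp_mul (s * g), ?_⟩
  refine (integrable_exp_mul_sq_gaussianReal (b := s ^ 2 * c / 2) (by linarith)).mono'
    h_meas.norm.prod_swap.integral_prod_right' (ae_of_all _ fun g ↦ ?_)
  simp only [norm_eq_abs, abs_exp]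
  rw [abs_of_nonneg (integral_nonneg fun _ ↦ (exp_pos _).le)]
  exact (hX.mgf_le (s * g)).trans_eq (by ring_nf)

-- Gaussian linearization: `exp (a X²)` is the average of `exp (√(2a) g X)` over a standard
-- Gaussian `g`, so after exchanging the integrals only linear exponentials of `X` remain.
lemma integrable_exp_mul_sq_and_integral_le_of_hasSubgaussianMGF [SFinite P]
    (hX : HasSubgaussianMGF X c P) (ha : 0 ≤ a) (hac : 2 * a * c < 1) :
    Integrable (fun ω ↦ exp (a * X ω ^ 2)) P ∧
      ∫ ω, exp (a * X ω ^ 2) ∂P ≤ (√(1 - 2 * a * c))⁻¹ := by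
  have h_sq : √(2 * a) ^ 2 = 2 * a := sq_sqrt (by positivity)
  have h_lin (ω : Ω) : exp (a * X ω ^ 2) = ∫ g, exp (√(2 * a) * g * X ω) ∂gaussianReal 0 1 := by
    rw [integral_exp_mul_mul_gaussianReal, h_sq, mul_div_cancel_left₀ a two_ne_zero]
  have h_int := integrable_exp_mul_mul_prod_gaussianReal hX (s := √(2 * a)) (by rwa [h_sq])
  simp only [h_lin]
  refine ⟨h_int.integral_prod_left, ?_⟩
  calc ∫ ω, ∫ g, exp (√(2 * a) * g * X ω) ∂gaussianReal 0 1 ∂P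
      = ∫ g, mgf X P (√(2 * a) * g) ∂gaussianReal 0 1 := integral_integral_swap h_int
    _ ≤ ∫ g, exp (a * c * g ^ 2) ∂gaussianReal 0 1 := by
        refine integral_mono_of_nonneg (ae_of_all _ fun _ ↦ mgf_nonneg)
          (integrable_exp_mul_sq_gaussianReal (by linarith)) (ae_of_all _ fun g ↦ ?_)
        refine (hX.mgf_le _).trans_eq ?_
        rw [mul_pow, h_sq]
        ring_nf
    _ = (√(1 - 2 * a * c))⁻¹ := by
        rw [integral_exp_mul_sq_gaussianReal, ← mul_assoc]

lemma integral_exp_mul_sq_le_of_hasSubgaussianMGF_sub [SFinite P] {m : ℝ}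
    (hX : HasSubgaussianMGF (fun ω ↦ X ω - m) c P) (ha : 0 ≤ a) (hac : 4 * a * c < 1) :
    ∫ ω, exp (a * X ω ^ 2) ∂P ≤ exp (2 * a * m ^ 2) * (√(1 - 4 * a * c))⁻¹ := by
  obtain ⟨h_int, h_le⟩ := integrable_exp_mul_sq_and_integral_le_of_hasSubgaussianMGF hX
    (a := 2 * a) (by positivity) (by linarith)
  calc ∫ ω, exp (a * X ω ^ 2) ∂P
      ≤ ∫ ω, exp (2 * a * m ^ 2) * exp (2 * a * (X ω - m) ^ 2) ∂P := by
        refine integral_mono_of_nonneg (ae_of_all _ fun _ ↦ (exp_pos _).le)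
          (h_int.const_mul _) (ae_of_all _ fun ω ↦ ?_)
        have h_split : X ω ^ 2 ≤ 2 * m ^ 2 + 2 * (X ω - m) ^ 2 := by
          linarith [sq_nonneg (X ω - 2 * m)]
        simp only [← exp_add, exp_le_exp]
        linarith [mul_le_mul_of_nonneg_left h_split ha]
    _ ≤ exp (2 * a * m ^ 2) * (√(1 - 4 * a * c))⁻¹ := by
        rw [integral_const_mul]
        gcongr
        exact h_le.trans_eq (by ring_nf)

end SquareExponential

section BoundedDifferences

lemma hasSubgaussianMGF_sub_integral_of_abs_sub_le {Ω : Type*} [MeasurableSpace Ω] {μ : Measure Ω}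
    [IsProbabilityMeasure μ] {X : Ω → ℝ} {c : ℝ} (hX : AEMeasurable X μ)
    (hc : ∀ x y, |X x - X y| ≤ c) :
    HasSubgaussianMGF (fun ω ↦ X ω - ∫ z, X z ∂μ) ((‖c‖₊ / 2) ^ 2) μ := by
  have := nonempty_of_isProbabilityMeasure μ
  have h_sub_le (x y : Ω) : X x - c ≤ X y := by linarith [(abs_le.1 (hc x y)).2]
  have h_bdd : BddBelow (Set.range X) :=
    ⟨X this.some - c, Set.forall_mem_range.2 (h_sub_le _)⟩
  have h_mem (x : Ω) : X x ∈ Set.Icc (⨅ z, X z) ((⨅ z, X z) + c) :=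
    ⟨ciInf_le h_bdd x, sub_le_iff_le_add.1 (le_ciInf (h_sub_le x))⟩
  simpa only [add_sub_cancel_left] using hasSubgaussianMGF_of_mem_Icc hX (ae_of_all μ h_mem)

lemma hasSubgaussianMGF_prod_add {α β : Type*} [MeasurableSpace α] [MeasurableSpace β]
    {μ : Measure α} {ν : Measure β} [SFinite μ] [SFinite ν] {U : α × β → ℝ} {V : β → ℝ}
    {c c' : NNReal} (hU_meas : AEMeasurable U (μ.prod ν))
    (hU : ∀ y, HasSubgaussianMGF (fun x ↦ U (x, y)) c μ) (hV : HasSubgaussianMGF V c' ν) :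
    HasSubgaussianMGF (fun p ↦ U p + V p.2) (c + c') (μ.prod ν) := by
  have h_slice (t : ℝ) (y : β) : ∫ x, exp (t * (U (x, y) + V y)) ∂μ
      ≤ exp (c * t ^ 2 / 2) * exp (t * V y) := by
    simp only [mul_add, exp_add, integral_mul_const]
    gcongr
    exact (hU y).mgf_le t
  have h_int (t : ℝ) : Integrable (fun p ↦ exp (t * (U p + V p.2))) (μ.prod ν) := by
    have h_meas : AEStronglyMeasurable (fun p ↦ exp (t * (U p + V p.2))) (μ.prod ν) :=
      ((hU_meas.add hV.aemeasurable.comp_snd).const_mul t).exp.aestronglyMeasurable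
    refine (integrable_prod_iff' h_meas).2 ⟨ae_of_all _ fun y ↦ ?_, ?_⟩
    · simp only [mul_add, exp_add]
      exact ((hU y).integrable_exp_mul t).mul_const _
    · refine ((hV.integrable_exp_mul t).const_mul (exp (c * t ^ 2 / 2))).mono'
        h_meas.norm.prod_swap.integral_prod_right' (ae_of_all _ fun y ↦ ?_)
      simp only [norm_eq_abs, abs_exp]
      rw [abs_of_nonneg (integral_nonneg fun _ ↦ (exp_pos _).le)]
      exact h_slice t y
  refine ⟨h_int, fun t ↦ ?_⟩
  calc mgf (fun p ↦ U p + V p.2) (μ.prod ν) t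
      = ∫ y, ∫ x, exp (t * (U (x, y) + V y)) ∂μ ∂ν := integral_prod_symm _ (h_int t)
    _ ≤ ∫ y, exp (c * t ^ 2 / 2) * exp (t * V y) ∂ν :=
        integral_mono_of_nonneg (ae_of_all _ fun _ ↦ integral_nonneg fun _ ↦ (exp_pos _).le)
          ((hV.integrable_exp_mul t).const_mul _) (ae_of_all _ (h_slice t))
    _ ≤ exp (c * t ^ 2 / 2) * exp (c' * t ^ 2 / 2) := by
        rw [integral_const_mul]
        gcongr
        exact hV.mgf_le t
    _ = exp (↑(c + c') * t ^ 2 / 2) := by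
        rw [← exp_add, NNReal.coe_add]
        ring_nf

lemma hasSubgaussianMGF_of_comp_measurePreserving {α β : Type*} [MeasurableSpace α]
    [MeasurableSpace β] {μ : Measure α} {ν : Measure β} {e : α ≃ᵐ β} {X : β → ℝ} {c : NNReal}
    (he : MeasurePreserving e μ ν) (hX : HasSubgaussianMGF (X ∘ e) c μ) :
    HasSubgaussianMGF X c ν := by
  rw [← (he.symm e).map_eq] at hX
  simpa only [comp_assoc, e.self_comp_symm, comp_id] using hX.of_map e.symm.measurable.aemeasurable

namespace HasBoundedDifferences

lemma abs_sub_le_sum {ι : Type*} [Fintype ι] {T : ι → Type*} {F : (∀ i, T i) → ℝ} {c : ι → ℝ}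
    (hF : HasBoundedDifferences F c) (x y : ∀ i, T i) : |F x - F y| ≤ ∑ i, c i := by
  classical
  have h_partial (s : Finset ι) : |F (s.piecewise x y) - F y| ≤ ∑ i ∈ s, c i := by
    induction s using Finset.induction_on with
    | empty => simp
    | insert i s hi ih =>
      rw [Finset.sum_insert hi]
      refine (abs_sub_le _ (F (s.piecewise x y)) _).trans (add_le_add (hF i _ _ fun j hj ↦ ?_) ih)
      exact s.piecewise_insert_of_ne x y hj
  simpa only [Finset.piecewise_univ] using h_partial Finset.univ

lemma integrable {ι : Type*} [Finite ι] {T : ι → Type*} [∀ i, MeasurableSpace (T i)]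
    {F : (∀ i, T i) → ℝ} {c : ι → ℝ} (hF : HasBoundedDifferences F c) {P : Measure (∀ i, T i)}
    [IsFiniteMeasure P] (hF_meas : AEStronglyMeasurable F P) : Integrable F P := by
  have := Fintype.ofFinite ι
  cases isEmpty_or_nonempty (∀ i, T i) with
  | inl _ => exact .of_isEmpty
  | inr h_nonempty =>
    obtain ⟨x₀⟩ := h_nonempty
    refine .of_bound hF_meas (∑ i, c i + |F x₀|) (ae_of_all _ fun x ↦ ?_)
    rw [norm_eq_abs]
    linarith [hF.abs_sub_le_sum x x₀, abs_sub_abs_le_abs_sub (F x) (F x₀)]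

section Cons

variable {n : ℕ} {T : Fin (n + 1) → Type*} {F : (∀ i, T i) → ℝ} {c : Fin (n + 1) → ℝ}

lemma abs_cons_sub_cons_le (hF : HasBoundedDifferences F c) (x x' : T 0)
    (y : ∀ i : Fin n, T i.succ) : |F (Fin.cons x y) - F (Fin.cons x' y)| ≤ c 0 :=
  hF 0 _ _ fun j hj ↦ by
    obtain ⟨k, rfl⟩ := Fin.exists_succ_eq.2 hj
    simp only [Fin.cons_succ]

lemma cons_right (hF : HasBoundedDifferences F c) (x : T 0) :
    HasBoundedDifferences (fun y : ∀ i : Fin n, T i.succ ↦ F (Fin.cons x y)) (fun i ↦ c i.succ) :=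
  fun i y y' h ↦ hF i.succ _ _ fun j hj ↦ by
    cases j using Fin.cases with
    | zero => rfl
    | succ k => simpa only [Fin.cons_succ] using h k fun hk ↦ hj (congrArg Fin.succ hk)

end Cons

lemma integral {ι α : Type*} [MeasurableSpace α] {T : ι → Type*} {F : α → (∀ i, T i) → ℝ}
    {c : ι → ℝ} {μ : Measure α} [IsProbabilityMeasure μ]
    (hF : ∀ a, HasBoundedDifferences (F a) c) (hF_int : ∀ x, Integrable (fun a ↦ F a x) μ) :
    HasBoundedDifferences (fun x ↦ ∫ a, F a x ∂μ) c := by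
  intro i x y h
  rw [← integral_sub (hF_int x) (hF_int y)]
  simpa using norm_integral_le_of_norm_le_const (f := fun a ↦ F a x - F a y)
    (ae_of_all μ fun a ↦ hF a i x y h)

lemma comp_piCongrLeft {ι κ : Type*} {T : ι → Type*} {F : (∀ i, T i) → ℝ} {c : ι → ℝ}
    (hF : HasBoundedDifferences F c) (e : κ ≃ ι) :
    HasBoundedDifferences (F ∘ Equiv.piCongrLeft T e) (c ∘ e) :=
  fun i x y h ↦ hF (e i) _ _ fun j hj ↦ by
    obtain ⟨k, rfl⟩ := e.surjective j
    simpa only [Equiv.piCongrLeft_apply_apply] using h k (ne_of_apply_ne e hj)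

-- Conditionally on the last `n` coordinates `F` oscillates by at most `c 0`, so Hoeffding's lemma
-- applies to the first one; averaging it out leaves a function of `n` variables.
lemma hasSubgaussianMGF_sub_integral_fin {n : ℕ} {T : Fin n → Type*}
    [∀ i, MeasurableSpace (T i)] {μ : ∀ i, Measure (T i)} [∀ i, IsProbabilityMeasure (μ i)]
    {F : (∀ i, T i) → ℝ} {c : Fin n → ℝ} (hF : HasBoundedDifferences F c) (hF_meas : Measurable F) :
    HasSubgaussianMGF (fun x ↦ F x - ∫ z, F z ∂Measure.pi μ) (∑ i, (‖c i‖₊ / 2) ^ 2)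
      (Measure.pi μ) := by
  induction n with
  | zero =>
    have h_const (x : ∀ i, T i) : F x = F default := congrArg F (Subsingleton.elim _ _)
    simp [h_const]
  | succ n ih =>
    let ν := Measure.pi fun i : Fin n ↦ μ i.succ
    let e : T 0 × (∀ i : Fin n, T i.succ) ≃ᵐ ∀ i, T i := (MeasurableEquiv.piFinSuccAbove T 0).symm
    let G (y : ∀ i : Fin n, T i.succ) : ℝ := ∫ x, F (Fin.cons x y) ∂μ 0
    have he : MeasurePreserving e ((μ 0).prod ν) (Measure.pi μ) :=
      (measurePreserving_piFinSuccAbove μ 0).symm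
    have he_cons (p : T 0 × ∀ i : Fin n, T i.succ) : e p = Fin.cons p.1 p.2 :=
      Fin.insertNth_zero p.1 p.2
    have h_meas : Measurable fun p : T 0 × (∀ i : Fin n, T i.succ) ↦ F (Fin.cons p.1 p.2) := by
      simpa only [← he_cons, comp_def] using hF_meas.comp e.measurable
    have h_slice_meas (y : ∀ i : Fin n, T i.succ) : Measurable fun x ↦ F (Fin.cons x y) :=
      h_meas.comp measurable_prodMk_right
    have hG_meas : Measurable G := h_meas.stronglyMeasurable.integral_prod_left'.measurable
    have h_mean : ∫ y, G y ∂ν = ∫ z, F z ∂Measure.pi μ := by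
      rw [← he.integral_comp', integral_prod_symm]
      · simp only [he_cons, G]
      · exact he.integrable_comp_of_integrable (hF.integrable hF_meas.aestronglyMeasurable)
    have h_first (y : ∀ i : Fin n, T i.succ) :
        HasSubgaussianMGF (fun x ↦ F (Fin.cons x y) - G y) ((‖c 0‖₊ / 2) ^ 2) (μ 0) :=
      hasSubgaussianMGF_sub_integral_of_abs_sub_le (h_slice_meas y).aemeasurable
        fun x x' ↦ hF.abs_cons_sub_cons_le x x' y
    have hG : HasBoundedDifferences G fun i ↦ c i.succ :=
      .integral (fun x ↦ hF.cons_right x) fun y ↦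
        ((h_first y).integrable.add (integrable_const (G y))).congr
          (ae_of_all _ fun _ ↦ sub_add_cancel _ _)
    have h_prod := hasSubgaussianMGF_prod_add (U := fun p ↦ F (Fin.cons p.1 p.2) - G p.2)
      (h_meas.sub (hG_meas.comp measurable_snd)).aemeasurable h_first
      (ih (μ := fun i ↦ μ i.succ) hG hG_meas)
    rw [Fin.sum_univ_succ]
    refine hasSubgaussianMGF_of_comp_measurePreserving he ?_
    simpa only [sub_add_sub_cancel, h_mean, ← he_cons, ν, comp_def] using h_prod

theorem hasSubgaussianMGF_sub_integral {ι : Type*} [Fintype ι] {T : ι → Type*}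
    [∀ i, MeasurableSpace (T i)] {μ : ∀ i, Measure (T i)} [∀ i, IsProbabilityMeasure (μ i)]
    {F : (∀ i, T i) → ℝ} {c : ι → ℝ} (hF : HasBoundedDifferences F c) (hF_meas : Measurable F) :
    HasSubgaussianMGF (fun x ↦ F x - ∫ z, F z ∂Measure.pi μ) (∑ i, (‖c i‖₊ / 2) ^ 2)
      (Measure.pi μ) := by
  let e := (Fintype.equivFin ι).symm
  let E := MeasurableEquiv.piCongrLeft T e
  have hE : MeasurePreserving E (Measure.pi fun i ↦ μ (e i)) (Measure.pi μ) :=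
    measurePreserving_piCongrLeft μ e
  have h_fin := (hF.comp_piCongrLeft e).hasSubgaussianMGF_sub_integral_fin
    (μ := fun i ↦ μ (e i)) (hF_meas.comp E.measurable)
  refine hasSubgaussianMGF_of_comp_measurePreserving hE ?_
  rw [← hE.integral_comp', ← e.sum_comp]
  exact h_fin

end HasBoundedDifferences

end BoundedDifferences

section VStatistic

lemma measurable_apply_eval_eval {ι Ω : Type*} [MeasurableSpace Ω] {φ : Ω → Ω → ℝ}
    (hφ : Measurable (uncurry φ)) (i j : ι) : Measurable fun x : ι → Ω ↦ φ (x i) (x j) :=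
  have h_pair : Measurable fun x : ι → Ω ↦ (x i, x j) :=
    (measurable_pi_apply i).prodMk (measurable_pi_apply j)
  hφ.comp h_pair

variable {ι Ω : Type*} [Fintype ι] {φ : Ω → Ω → ℝ} {B : ℝ}

lemma abs_inv_card_sq_mul_sum_sum_le {f g : ι → ι → ℝ} (h : ∀ i j, |f i j| ≤ g i j) :
    |((Fintype.card ι : ℝ) ^ 2)⁻¹ * ∑ i, ∑ j, f i j|
      ≤ ((Fintype.card ι : ℝ) ^ 2)⁻¹ * ∑ i, ∑ j, g i j := by
  rw [abs_mul, abs_of_nonneg (by positivity)]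
  gcongr
  exact (Finset.abs_sum_le_sum_abs _ _).trans <| Finset.sum_le_sum fun i _ ↦
    (Finset.abs_sum_le_sum_abs _ _).trans <| Finset.sum_le_sum fun j _ ↦ h i j

lemma hasBoundedDifferences_vStatistic (hB : ∀ x y, |φ x y| ≤ B) :
    HasBoundedDifferences (vStatistic (ι := ι) φ) fun _ ↦ 4 * B / Fintype.card ι := by
  classical
  intro k x y hxy
  have := Nonempty.intro k
  have h_osc (a b a' b' : Ω) : |φ a b - φ a' b'| ≤ 2 * B :=
    (abs_sub _ _).trans (by linarith [hB a b, hB a' b'])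
  have hB₀ : 0 ≤ B := (abs_nonneg _).trans (hB (x k) (x k))
  have h_term (i j : ι) : |φ (x i) (x j) - φ (y i) (y j)|
      ≤ (if i = k then 2 * B else 0) + if j = k then 2 * B else 0 := by
    by_cases hi : i = k
    · rw [if_pos hi]
      refine (h_osc _ _ _ _).trans (le_add_of_nonneg_right ?_)
      split_ifs <;> positivity
    · by_cases hj : j = k
      · simpa only [if_neg hi, if_pos hj, zero_add] using h_osc _ _ _ _
      · simp [hi, hj, hxy i hi, hxy j hj]
  simp only [vStatistic, ← mul_sub, ← Finset.sum_sub_distrib]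
  refine (abs_inv_card_sq_mul_sum_sum_le h_term).trans_eq ?_
  simp only [Finset.sum_add_distrib, Finset.sum_const, Finset.card_univ, nsmul_eq_mul,
    ← Finset.mul_sum, Finset.sum_ite_eq', Finset.mem_univ, if_true]
  field_simp
  ring

variable [MeasurableSpace Ω]

lemma measurable_vStatistic (hφ : Measurable (uncurry φ)) :
    Measurable (vStatistic (ι := ι) φ) :=
  (Finset.measurable_sum _ fun i _ ↦ Finset.measurable_sum _ fun j _ ↦
    measurable_apply_eval_eval hφ i j).const_mul _

lemma measurePreserving_eval_prodMk_eval {T : ι → Type*} [∀ i, MeasurableSpace (T i)]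
    {μ : ∀ i, Measure (T i)} [∀ i, IsProbabilityMeasure (μ i)] {i j : ι} (hij : i ≠ j) :
    MeasurePreserving (fun x : ∀ i, T i ↦ (x i, x j)) (Measure.pi μ) ((μ i).prod (μ j)) where
  measurable := (measurable_pi_apply i).prodMk (measurable_pi_apply j)
  map_eq := by
    have h_indep : iIndepFun (fun k (x : ∀ i, T i) ↦ x k) (Measure.pi μ) :=
      iIndepFun_pi (X := fun _ ↦ id) fun _ ↦ aemeasurable_id
    rw [(h_indep.indepFun hij).map_prod_eq_prod_map_map (measurable_pi_apply i).aemeasurable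
      (measurable_pi_apply j).aemeasurable, (measurePreserving_eval μ i).map_eq,
      (measurePreserving_eval μ j).map_eq]

lemma integral_eval_eval_eq_integral_integral {T : ι → Type*} [∀ i, MeasurableSpace (T i)]
    {μ : ∀ i, Measure (T i)} [∀ i, IsProbabilityMeasure (μ i)] {i j : ι} (hij : i ≠ j)
    {f : T i → T j → ℝ} (hf : Integrable (uncurry f) ((μ i).prod (μ j))) :
    ∫ x, f (x i) (x j) ∂Measure.pi μ = ∫ a, ∫ b, f a b ∂μ j ∂μ i := by
  have h_pair := measurePreserving_eval_prodMk_eval (μ := μ) hij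
  calc ∫ x, f (x i) (x j) ∂Measure.pi μ
      = ∫ p, uncurry f p ∂(Measure.pi μ).map fun x ↦ (x i, x j) :=
        (integral_map h_pair.aemeasurable (h_pair.map_eq ▸ hf.aestronglyMeasurable)).symm
    _ = ∫ a, ∫ b, f a b ∂μ j ∂μ i := by rw [h_pair.map_eq]; exact integral_prod _ hf

variable {ρ : Measure Ω} [IsProbabilityMeasure ρ]

lemma abs_integral_vStatistic_le (hφ : Measurable (uncurry φ)) (hB : ∀ x y, |φ x y| ≤ B)
    (h_cancel : ∫ x, ∫ y, φ x y ∂ρ ∂ρ = 0) :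
    |∫ x : ι → Ω, vStatistic φ x ∂(Measure.pi fun _ ↦ ρ)| ≤ B / Fintype.card ι := by
  classical
  have h_int (i j : ι) :
      Integrable (fun x : ι → Ω ↦ φ (x i) (x j)) (Measure.pi fun _ ↦ ρ) :=
    .of_bound (measurable_apply_eval_eval hφ i j).aestronglyMeasurable B
      (ae_of_all _ fun x ↦ hB _ _)
  have h_term (i j : ι) :
      |∫ x : ι → Ω, φ (x i) (x j) ∂(Measure.pi fun _ ↦ ρ)| ≤ if i = j then B else 0 := by
    split_ifs with hij
    · simpa using norm_integral_le_of_norm_le_const (f := fun x : ι → Ω ↦ φ (x i) (x j))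
        (ae_of_all (Measure.pi fun _ ↦ ρ) fun x ↦ hB _ _)
    · have hφ_int : Integrable (uncurry φ) (ρ.prod ρ) :=
        .of_bound hφ.aestronglyMeasurable B (ae_of_all _ fun p ↦ hB _ _)
      rw [integral_eval_eval_eq_integral_integral hij hφ_int, h_cancel, abs_zero]
  simp only [vStatistic]
  rw [integral_const_mul, integral_finsetSum _ fun i _ ↦ integrable_finsetSum _ fun j _ ↦ h_int i j]
  simp only [integral_finsetSum _ fun j _ ↦ h_int _ j]
  refine (abs_inv_card_sq_mul_sum_sum_le h_term).trans_eq ?_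
  simp only [Finset.sum_ite_eq, Finset.mem_univ, if_true, Finset.sum_const, Finset.card_univ,
    nsmul_eq_mul]
  field_simp

theorem statement2_general [Nonempty ι] (hφ : Measurable (uncurry φ)) (hB : ∀ x y, |φ x y| ≤ B)
    (h_cancel : ∫ x, ∫ y, φ x y ∂ρ ∂ρ = 0) (h_small : 16 * B ^ 2 < 1) :
    ∫ x : ι → Ω, exp (Fintype.card ι * |vStatistic φ x| ^ 2) ∂(Measure.pi fun _ ↦ ρ)
      ≤ exp (2 * B ^ 2) * (√(1 - 16 * B ^ 2))⁻¹ := by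
  have hn : 1 ≤ (Fintype.card ι : ℝ) := Nat.one_le_cast.2 Fintype.card_pos
  have h_diff := hasBoundedDifferences_vStatistic (ι := ι) hB
  have h_subgaussian := h_diff.hasSubgaussianMGF_sub_integral (μ := fun _ ↦ ρ)
    (measurable_vStatistic hφ)
  have h_mean := abs_integral_vStatistic_le (ι := ι) hφ hB h_cancel
  generalize ∫ x : ι → Ω, vStatistic φ x ∂(Measure.pi fun _ ↦ ρ) = m at h_subgaussian h_mean
  have h_proxy : 4 * (Fintype.card ι : ℝ) *
      ↑(∑ _ : ι, (‖4 * B / Fintype.card ι‖₊ / 2) ^ 2 : NNReal) = 16 * B ^ 2 := by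
    simp only [Finset.sum_const, Finset.card_univ, nsmul_eq_mul]
    push_cast
    rw [norm_eq_abs, div_pow, sq_abs]
    field_simp
    ring
  have h_mean_sq : Fintype.card ι * m ^ 2 ≤ B ^ 2 := by
    calc Fintype.card ι * m ^ 2 ≤ Fintype.card ι * (B / Fintype.card ι) ^ 2 := by
          rw [← sq_abs m]; gcongr
      _ = B ^ 2 / Fintype.card ι := by field_simp
      _ ≤ B ^ 2 := div_le_self (sq_nonneg B) hn
  simp only [sq_abs]
  refine (integral_exp_mul_sq_le_of_hasSubgaussianMGF_sub h_subgaussian (by positivity)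
    (h_proxy.trans_lt h_small)).trans ?_
  rw [h_proxy]
  exact mul_le_mul_of_nonneg_right (exp_le_exp.2 (by linarith)) (by positivity)

end VStatistic

lemma exp_mul_inv_sqrt_one_sub_le_s2 {b : ℝ} (hb : 0 ≤ b) (hb' : 18 * b < 1) :
    exp (2 * b) * (√(1 - 16 * b))⁻¹ ≤ (1 - 18 * b)⁻¹ := by
  have h_exp : exp (2 * b) ≤ (1 - 2 * b)⁻¹ := by
    simpa only [one_div] using exp_bound_div_one_sub_of_interval (by positivity) (by linarith)
  have h_sqrt : 1 - 16 * b ≤ √(1 - 16 * b) := le_sqrt_of_sq_le (by nlinarith)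
  have h_pos : 0 < 1 - 16 * b := by linarith
  calc exp (2 * b) * (√(1 - 16 * b))⁻¹
      ≤ (1 - 2 * b)⁻¹ * (1 - 16 * b)⁻¹ := by gcongr; exact inv_nonneg.2 (by linarith)
    _ = ((1 - 2 * b) * (1 - 16 * b))⁻¹ := (mul_inv _ _).symm
    _ ≤ (1 - 18 * b)⁻¹ := inv_anti₀ (by linarith) (by nlinarith [sq_nonneg b])

lemma exp_mul_inv_sqrt_one_sub_le_one_add {b α β : ℝ} (hb : 0 ≤ b) (hbα : 18 * b ≤ α) (hα : α < 1)
    (hβ₀ : 0 ≤ β) (hβ : β < 1) :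
    exp (2 * b) * (√(1 - 16 * b))⁻¹ ≤ 1 + α / (1 - α) + β / (1 - β) := by
  have hα' : 0 < 1 - α := sub_pos.2 hα
  calc exp (2 * b) * (√(1 - 16 * b))⁻¹
      ≤ (1 - 18 * b)⁻¹ := exp_mul_inv_sqrt_one_sub_le_s2 hb (hbα.trans_lt hα)
    _ ≤ (1 - α)⁻¹ := by gcongr
    _ = 1 + α / (1 - α) := by field_simp; ring
    _ ≤ 1 + α / (1 - α) + β / (1 - β) :=
        le_add_of_nonneg_right (div_nonneg hβ₀ (sub_nonneg.2 hβ.le))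

lemma eighteen_le_exp_nine : 18 ≤ exp 9 := by
  linarith [quadratic_le_exp_of_nonneg (x := 9) (by norm_num)]

/-- **Second large deviation estimate (Lemma 2.3 of Wang–Zhao–Zhu).**
Let `ρ̄` be a probability measure on the torus `𝕋^d` (`d ≥ 1`) and let
`φ : 𝕋^d × 𝕋^d → ℝ` be bounded measurable (pointwise bound `B`) with the cancellation
`∬ φ(x,y) dρ̄(x) dρ̄(y) = 0`.  Set `α₀ := e⁹ ‖φ‖_∞²` and `β₀ := 4e ‖φ‖_∞²` and assume
`α₀ < 1`, `β₀ < 1`.  Then for every `N ≥ 1`,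
`∫ exp(N |⟨φ, μ_N ⊗ μ_N⟩|²) dρ̄^{⊗N} ≤ 1 + α₀/(1 − α₀) + β₀/(1 − β₀)`,
where `⟨φ, μ_N ⊗ μ_N⟩ = N⁻² ∑_{i,j} φ(x_i, x_j)`. -/
theorem statement2 (d : ℕ) (hd : 1 ≤ d)
    (ρ : Measure (Torus d)) [IsProbabilityMeasure ρ]
    (φ : Torus d → Torus d → ℝ) (hφmeas : Measurable (Function.uncurry φ))
    (B : ℝ) (hφbdd : ∀ x y, |φ x y| ≤ B)
    (hcancel : ∫ x, ∫ y, φ x y ∂ρ ∂ρ = 0)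
    (hα₀ : Real.exp 9 * B ^ 2 < 1) (hβ₀ : 4 * Real.exp 1 * B ^ 2 < 1) :
    ∀ N : ℕ, 1 ≤ N →
      ∫ x : Fin N → Torus d,
          Real.exp ((N : ℝ) *
            |((N : ℝ) ^ 2)⁻¹ * ∑ i : Fin N, ∑ j : Fin N, φ (x i) (x j)| ^ 2)
        ∂(Measure.pi fun _ => ρ)
      ≤ 1 + (Real.exp 9 * B ^ 2) / (1 - Real.exp 9 * B ^ 2)
          + (4 * Real.exp 1 * B ^ 2) / (1 - 4 * Real.exp 1 * B ^ 2) := by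
  intro N hN
  have := Fin.pos_iff_nonempty.1 hN
  have hB₀ := sq_nonneg B
  have hBα : 18 * B ^ 2 ≤ exp 9 * B ^ 2 := mul_le_mul_of_nonneg_right eighteen_le_exp_nine hB₀
  simpa only [vStatistic, Fintype.card_fin] using
    (statement2_general (ι := Fin N) hφmeas hφbdd hcancel (by linarith)).trans
      (exp_mul_inv_sqrt_one_sub_le_one_add hB₀ hBα hα₀ (by positivity) hβ₀)
end

section
/- For all integers m ≥ 1 and N with 4m ≤ N, one has (1/(m! · N^{3m})) · Σ_{l=0}^{2m} Σ_{p=1}^{⌊(4m−l)/2⌋} C(N,l) · C(N−l,p) · C(2m,l) · 2^l · l! · p^{4m−l} ≤ e^{9m}, where C(a,b) denotes the binomial coefficient 'a choose b'. -/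
/-!
Each summand is controlled by the single inequality `x ^ n ≤ n! * exp x`. Up to the factor
`C(2m,l) * 2 ^ l`, write `p ^ (4m-l) = p ^ p * p ^ d * p ^ m` with `d = 3m - l - p`: the powers
`p ^ p` and `p ^ m` cost `p! * exp p` and `m! * exp p`, the power `p ^ d` is at most `N ^ d` unless
`C(N-l,p)` vanishes, and the binomial coefficients absorb `l!` and `p!` into `N ^ l` and `N ^ p`.
Since `p ≤ 2m`, this leaves `m! * N ^ (3m) * exp (4m)`. The number of values of `p` is at most
`2m ≤ exp m`, and the weights `C(2m,l) * 2 ^ l` add up to `3 ^ (2m) ≤ exp (4m)`.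
-/

open Finset Real
open scoped Nat

theorem pow_le_factorial_mul_exp {x : ℝ} (hx : 0 ≤ x) (n : ℕ) : x ^ n ≤ n ! * exp x :=
  (div_le_iff₀' (by positivity)).1 (pow_div_factorial_le_exp x hx n)

theorem choose_mul_factorial_le_pow (n k : ℕ) : (n.choose k : ℝ) * k ! ≤ (n : ℝ) ^ k :=
  (le_div_iff₀ (by positivity)).1 (Nat.choose_le_pow_div k n)

theorem choose_mul_pow_add_le (n p d : ℕ) :
    (n.choose p : ℝ) * (p : ℝ) ^ (p + d) ≤ (n : ℝ) ^ (p + d) * exp p := by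
  obtain hnp | hpn := lt_or_ge n p
  · rw [Nat.choose_eq_zero_of_lt hnp, Nat.cast_zero, zero_mul]
    positivity
  calc (n.choose p : ℝ) * (p : ℝ) ^ (p + d)
      = n.choose p * (p : ℝ) ^ p * (p : ℝ) ^ d := by ring
    _ ≤ n.choose p * (p ! * exp p) * (n : ℝ) ^ d := by
        gcongr
        exact pow_le_factorial_mul_exp p.cast_nonneg p
    _ = n.choose p * p ! * exp p * (n : ℝ) ^ d := by ring
    _ ≤ (n : ℝ) ^ p * exp p * (n : ℝ) ^ d := by
        gcongr
        exact choose_mul_factorial_le_pow n p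
    _ = (n : ℝ) ^ (p + d) * exp p := by ring

theorem choose_mul_factorial_mul_choose_mul_pow_le (N l p d m : ℕ) :
    (N.choose l : ℝ) * l ! * (N - l).choose p * (p : ℝ) ^ (p + d + m) ≤
      m ! * (N : ℝ) ^ (l + p + d) * exp (2 * p) := by
  have choose_mul_pow_le : ((N - l).choose p : ℝ) * (p : ℝ) ^ (p + d) ≤
      (N : ℝ) ^ (p + d) * exp p := by
    refine (choose_mul_pow_add_le (N - l) p d).trans ?_
    gcongr
    exact N.sub_le l
  calc (N.choose l : ℝ) * l ! * (N - l).choose p * (p : ℝ) ^ (p + d + m)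
      = (N.choose l * l !) * ((N - l).choose p * (p : ℝ) ^ (p + d)) * (p : ℝ) ^ m := by ring
    _ ≤ (N : ℝ) ^ l * ((N : ℝ) ^ (p + d) * exp p) * (m ! * exp p) := by
        gcongr
        · exact choose_mul_factorial_le_pow N l
        · exact pow_le_factorial_mul_exp p.cast_nonneg m
    _ = m ! * (N : ℝ) ^ (l + p + d) * exp (2 * p) := by
        rw [two_mul, exp_add]
        ring

theorem sum_choose_mul_pow_le_exp {x : ℝ} (hx : 0 ≤ 1 + x) (n : ℕ) :
    ∑ l ∈ range (n + 1), (n.choose l : ℝ) * x ^ l ≤ exp (n * x) := by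
  calc ∑ l ∈ range (n + 1), (n.choose l : ℝ) * x ^ l
      = (x + 1) ^ n := by simp only [add_pow, one_pow, mul_one, mul_comm]
    _ ≤ exp x ^ n := by
        gcongr
        · rwa [add_comm]
        · exact add_one_le_exp x
    _ = exp (n * x) := (exp_nat_mul x n).symm

/-- The summand of index `(l, p)` in the double sum to be estimated. The truncated subtractions are
harmless: the summand vanishes for `N < l`, and the sum runs over `l ≤ 2 * m`. -/
noncomputable def summand (m N l p : ℕ) : ℝ :=
  N.choose l * (N - l).choose p * (2 * m).choose l * 2 ^ l * l ! * (p : ℝ) ^ (4 * m - l)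

theorem summand_le {m l p : ℕ} (N : ℕ) (hl : l ≤ 2 * m) (hp : p ≤ (4 * m - l) / 2) :
    summand m N l p ≤
      m ! * (N : ℝ) ^ (3 * m) * exp (4 * m) * ((2 * m).choose l * 2 ^ l) := by
  obtain ⟨d, hd⟩ : ∃ d, 3 * m = l + p + d := Nat.exists_eq_add_of_le (by lia)
  have exponent_eq : 4 * m - l = p + d + m := by lia
  have two_mul_p_le : (2 * p : ℝ) ≤ 4 * m := by exact_mod_cast (by lia : 2 * p ≤ 4 * m)
  rw [summand, exponent_eq, hd]
  calc (N.choose l : ℝ) * (N - l).choose p * (2 * m).choose l * 2 ^ l * l ! *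
        (p : ℝ) ^ (p + d + m)
      = N.choose l * l ! * (N - l).choose p * (p : ℝ) ^ (p + d + m) *
          ((2 * m).choose l * 2 ^ l) := by ring
    _ ≤ m ! * (N : ℝ) ^ (l + p + d) * exp (2 * p) * ((2 * m).choose l * 2 ^ l) := by
        gcongr ?_ * _
        exact choose_mul_factorial_mul_choose_mul_pow_le N l p d m
    _ ≤ m ! * (N : ℝ) ^ (l + p + d) * exp (4 * m) * ((2 * m).choose l * 2 ^ l) := by gcongr

theorem sum_Icc_summand_le {m l : ℕ} (N : ℕ) (hl : l ≤ 2 * m) :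
    ∑ p ∈ Icc 1 ((4 * m - l) / 2), summand m N l p ≤
      m ! * (N : ℝ) ^ (3 * m) * exp (5 * m) * ((2 * m).choose l * 2 ^ l) := by
  set B : ℝ := m ! * (N : ℝ) ^ (3 * m) * exp (4 * m) * ((2 * m).choose l * 2 ^ l) with hB
  have card_le_exp : (#(Icc 1 ((4 * m - l) / 2)) : ℝ) ≤ exp m := by
    have card_le : #(Icc 1 ((4 * m - l) / 2)) ≤ 2 * m := by
      rw [Nat.card_Icc]
      lia
    calc (#(Icc 1 ((4 * m - l) / 2)) : ℝ) ≤ 2 * m := by exact_mod_cast card_le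
      _ ≤ exp m := two_mul_le_exp
  calc ∑ p ∈ Icc 1 ((4 * m - l) / 2), summand m N l p
      ≤ #(Icc 1 ((4 * m - l) / 2)) • B :=
        sum_le_card_nsmul _ _ _ fun p hp ↦ summand_le N hl (mem_Icc.1 hp).2
    _ ≤ exp m * B := by
        rw [nsmul_eq_mul]
        gcongr
    _ = m ! * (N : ℝ) ^ (3 * m) * exp (5 * m) * ((2 * m).choose l * 2 ^ l) := by
        rw [hB, show (5 * m : ℝ) = m + 4 * m by ring, exp_add]
        ring

theorem statement4_general (m N : ℕ) :
    ∑ l ∈ range (2 * m + 1), ∑ p ∈ Icc 1 ((4 * m - l) / 2),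
        (N.choose l : ℝ) * (N - l).choose p * (2 * m).choose l * 2 ^ l * l ! *
          (p : ℝ) ^ (4 * m - l) ≤
      exp (9 * m) * (m ! * (N : ℝ) ^ (3 * m)) := by
  have sum_weights_le : ∑ l ∈ range (2 * m + 1), ((2 * m).choose l : ℝ) * 2 ^ l ≤ exp (4 * m) := by
    refine (sum_choose_mul_pow_le_exp (by norm_num) (2 * m)).trans_eq ?_
    push_cast
    ring_nf
  calc ∑ l ∈ range (2 * m + 1), ∑ p ∈ Icc 1 ((4 * m - l) / 2), summand m N l p
      ≤ ∑ l ∈ range (2 * m + 1),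
        m ! * (N : ℝ) ^ (3 * m) * exp (5 * m) * ((2 * m).choose l * 2 ^ l) :=
        sum_le_sum fun l hl ↦ sum_Icc_summand_le N (mem_range_succ_iff.1 hl)
    _ ≤ m ! * (N : ℝ) ^ (3 * m) * exp (5 * m) * exp (4 * m) := by
        rw [← mul_sum]
        gcongr
    _ = exp (9 * m) * (m ! * (N : ℝ) ^ (3 * m)) := by
        rw [show (9 * m : ℝ) = 5 * m + 4 * m by ring, exp_add]
        ring

/-- **Combinatorial estimate from the proof of Lemma 2.3.**
For all integers `m ≥ 1` and `N` with `4m ≤ N`,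
`(1/(m!·N^{3m})) · ∑_{l=0}^{2m} ∑_{p=1}^{⌊(4m−l)/2⌋}
  C(N,l)·C(N−l,p)·C(2m,l)·2^l·l!·p^{4m−l} ≤ e^{9m}`. -/
theorem statement4 (m N : ℕ) (hm : 1 ≤ m) (hN : 4 * m ≤ N) :
    (1 / ((Nat.factorial m : ℝ) * (N : ℝ) ^ (3 * m))) *
        ∑ l ∈ Finset.range (2 * m + 1),
          ∑ p ∈ Finset.Icc 1 ((4 * m - l) / 2),
            (Nat.choose N l : ℝ) * (Nat.choose (N - l) p : ℝ) *
              (Nat.choose (2 * m) l : ℝ) * 2 ^ l * (Nat.factorial l : ℝ) *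
              (p : ℝ) ^ (4 * m - l)
      ≤ Real.exp (9 * m) := by
  rw [one_div_mul_eq_div]
  exact div_le_of_le_mul₀ (by positivity) (by positivity) (statement4_general m N)
end

section
/- Let (E, ℰ) be a measurable space, let ν be a probability measure on E, and let Φ : E → [0,∞) be a bounded measurable function. Then log ∫_E e^{Φ} dν = sup { ∫_E Φ dμ − H(μ|ν) : μ a probability measure on E with H(μ|ν) < ∞ }. -/
open MeasureTheory Classical

/-- The relative entropy `H(μ|ν) := ∫ (dμ/dν) log(dμ/dν) dν` if `μ ≪ ν` (and the integrand
is integrable, i.e. the integral is finite; otherwise the value is `+∞`), with values in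
the extended reals. -/
noncomputable def relEntropy {E : Type*} [MeasurableSpace E] (μ ν : Measure E) : EReal :=
  if μ ≪ ν ∧ Integrable
      (fun x => (μ.rnDeriv ν x).toReal * Real.log (μ.rnDeriv ν x).toReal) ν
  then ((∫ x, (μ.rnDeriv ν x).toReal * Real.log (μ.rnDeriv ν x).toReal ∂ν : ℝ) : EReal)
  else ⊤

/-!
Tilting the reference measure gives the exact identity
`∫ Φ dμ − H(μ|ν) = log ∫ e^Φ dν − H(μ|ν_Φ)`, where `ν_Φ = e^Φ ν / ∫ e^Φ dν`.
Since `H(μ|ν_Φ) ≥ 0`, with equality at `μ = ν_Φ`, the supremum is attained at the Gibbs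
measure `ν_Φ`.
-/

section

open InformationTheory

variable {E : Type*} [MeasurableSpace E] {μ ν : Measure E} {Φ : E → ℝ}

lemma relEntropy_lt_top_iff [SigmaFinite μ] [μ.HaveLebesgueDecomposition ν] :
    relEntropy μ ν < ⊤ ↔ μ ≪ ν ∧ Integrable (llr μ ν) μ := by
  rw [← and_congr_right integrable_rnDeriv_mul_log_iff, relEntropy]
  split_ifs with h <;> simp [h, EReal.coe_lt_top]

lemma toReal_relEntropy [SigmaFinite μ] [μ.HaveLebesgueDecomposition ν]
    (h : relEntropy μ ν < ⊤) : (relEntropy μ ν).toReal = ∫ x, llr μ ν x ∂μ := by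
  obtain ⟨hμν, hllr⟩ := relEntropy_lt_top_iff.1 h
  rw [relEntropy, if_pos ⟨hμν, (integrable_rnDeriv_mul_log_iff hμν).2 hllr⟩, EReal.toReal_coe,
    integral_rnDeriv_mul_log hμν]

lemma integral_sub_toReal_relEntropy_eq_log_sub_klDiv [IsProbabilityMeasure μ] [SigmaFinite ν]
    (hexp : Integrable (fun x ↦ Real.exp (Φ x)) ν) (hΦ : Integrable Φ μ)
    (h : relEntropy μ ν < ⊤) :
    ∫ x, Φ x ∂μ - (relEntropy μ ν).toReal =
      Real.log (∫ x, Real.exp (Φ x) ∂ν) - (klDiv μ (ν.tilted Φ)).toReal := by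
  obtain ⟨hμν, hllr⟩ := relEntropy_lt_top_iff.1 h
  have : NeZero ν := ⟨fun hν ↦ IsProbabilityMeasure.ne_zero μ <|
    Measure.absolutelyContinuous_zero_iff.1 (hν ▸ hμν)⟩
  have := isProbabilityMeasure_tilted hexp
  have hklDiv : (klDiv μ (ν.tilted Φ)).toReal = ∫ x, llr μ (ν.tilted Φ) x ∂μ :=
    toReal_klDiv_of_measure_eq
      (hμν.trans (absolutelyContinuous_tilted hexp)) (by simp only [measure_univ])
  rw [hklDiv, integral_llr_tilted_right hμν hΦ hexp hllr, toReal_relEntropy h]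
  ring

lemma relEntropy_tilted_lt_top_iff [SigmaFinite ν]
    (hexp : Integrable (fun x ↦ Real.exp (Φ x)) ν) :
    relEntropy (ν.tilted Φ) ν < ⊤ ↔ Integrable Φ (ν.tilted Φ) := by
  have hac := tilted_absolutelyContinuous ν Φ
  have hllr : llr (ν.tilted Φ) ν =ᵐ[ν.tilted Φ]
      fun x ↦ Φ x - Real.log (∫ y, Real.exp (Φ y) ∂ν) :=
    hac.ae_le (log_rnDeriv_tilted_left_self hexp)
  rw [relEntropy_lt_top_iff, and_iff_right hac, integrable_congr hllr]
  simp only [sub_eq_add_neg, integrable_add_const_iff]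

theorem statement6_general [SigmaFinite ν] [NeZero ν]
    (hexp : Integrable (fun x ↦ Real.exp (Φ x)) ν) (hΦ : Integrable Φ (ν.tilted Φ)) :
    IsGreatest
      { r : ℝ | ∃ μ : Measure E, (IsProbabilityMeasure μ ∧ Integrable Φ μ) ∧
          relEntropy μ ν < ⊤ ∧ r = ∫ x, Φ x ∂μ - (relEntropy μ ν).toReal }
      (Real.log (∫ x, Real.exp (Φ x) ∂ν)) := by
  constructor
  · have hprob := isProbabilityMeasure_tilted hexp
    have hfin := (relEntropy_tilted_lt_top_iff hexp).2 hΦ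
    refine ⟨ν.tilted Φ, ⟨hprob, hΦ⟩, hfin, ?_⟩
    rw [integral_sub_toReal_relEntropy_eq_log_sub_klDiv hexp hΦ hfin, klDiv_self,
      ENNReal.toReal_zero, sub_zero]
  · rintro _ ⟨μ, ⟨hprob, hΦμ⟩, hfin, rfl⟩
    rw [integral_sub_toReal_relEntropy_eq_log_sub_klDiv hexp hΦμ hfin]
    exact sub_le_self _ ENNReal.toReal_nonneg

end

/-- **Donsker–Varadhan variational formula.**  Let `ν` be a probability measure on a
measurable space `E` and let `Φ : E → [0,∞)` be a bounded measurable function.  Then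
`log ∫ e^Φ dν = sup { ∫ Φ dμ − H(μ|ν) : μ a probability measure with H(μ|ν) < ∞ }`,
expressed here as: `log ∫ e^Φ dν` is the least upper bound of that set of reals. -/
theorem statement6 {E : Type*} [MeasurableSpace E]
    (ν : Measure E) [IsProbabilityMeasure ν]
    (Φ : E → ℝ) (hΦmeas : Measurable Φ) (hΦnonneg : ∀ x, 0 ≤ Φ x)
    (B : ℝ) (hΦbdd : ∀ x, Φ x ≤ B) :
    IsLUB
      { r : ℝ | ∃ μ : Measure E, IsProbabilityMeasure μ ∧ relEntropy μ ν < ⊤ ∧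
          r = ∫ x, Φ x ∂μ - (relEntropy μ ν).toReal }
      (Real.log (∫ x, Real.exp (Φ x) ∂ν)) := by
  have hΦ (μ : Measure E) (_ : IsProbabilityMeasure μ) : Integrable Φ μ :=
    .of_mem_Icc 0 B hΦmeas.aemeasurable (ae_of_all _ fun x ↦ ⟨hΦnonneg x, hΦbdd x⟩)
  have hexp : Integrable (fun x ↦ Real.exp (Φ x)) ν :=
    .of_mem_Icc 0 (Real.exp B) hΦmeas.exp.aemeasurable
      (ae_of_all _ fun x ↦ ⟨Real.exp_nonneg _, Real.exp_le_exp.2 (hΦbdd x)⟩)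
  simpa only [and_iff_left_of_imp (hΦ _)] using
    (statement6_general hexp (hΦ _ (isProbabilityMeasure_tilted hexp))).isLUB
end
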